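/- Let l be a nonzero real number and z₀ ∈ ℂ. Let J be a real interval containing 0 on which D(t) := (l + i z₀) e^(−i l t) − i z₀ is nonzero. Then the function z(t) := l z₀ / D(t) satisfies z(0) = z₀ and solves the complex Riccati equation z'(t) = −z(t)² + i l z(t) for all t ∈ J. -/

import Mathlib

/-- The explicit solution `z(t) = l z₀ / ((l + i z₀) e^(−i l t) − i z₀)`
of the complex Riccati equation `z' = −z² + i l z`. -/
noncomputable def riccatiSol (l : ℝ) (z₀ : ℂ) (t : ℝ) : ℂ :=
  (l : ℂ) * z₀ / (((l : ℂ) + Complex.I * z₀) * Complex.exp (-Complex.I * l * t) - Complex.I * z₀)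

/-!
The substitution `z = c / D` linearizes the Riccati equation: `z' = -z² + k z` holds as soon as
`D' = c - k D`. For `k = i l` and `c = l z₀`, this linear equation has the equilibrium `-i z₀`, and
`D` is the sum of that equilibrium and a multiple of `e^(-i l t)`.
-/

theorem hasDerivAt_const_div_of_hasDerivAt_linear
    {𝕜 𝕜' : Type*} [NontriviallyNormedField 𝕜] [NontriviallyNormedField 𝕜'] [NormedAlgebra 𝕜 𝕜']
    {D : 𝕜 → 𝕜'} {c k : 𝕜'} {t : 𝕜}
    (hD : HasDerivAt D (c - k * D t) t) (hDt : D t ≠ 0) :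
    HasDerivAt (fun s ↦ c / D s) (-(c / D t) ^ 2 + k * (c / D t)) t := by
  refine ((hasDerivAt_const t c).fun_div hD hDt).congr_deriv ?_
  field_simp
  ring

theorem hasDerivAt_const_mul_cexp_sub_const (A b μ t : ℂ) :
    HasDerivAt (fun s ↦ A * Complex.exp (μ * s) - b)
      (μ * b + μ * (A * Complex.exp (μ * t) - b)) t := by
  have h_exp : HasDerivAt (fun s ↦ Complex.exp (μ * s)) (Complex.exp (μ * t) * μ) t :=
    (hasDerivAt_const_mul μ).cexp
  refine ((h_exp.const_mul A).sub_const b).congr_deriv ?_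
  ring

theorem riccatiSol_zero {l : ℝ} (hl : l ≠ 0) (z₀ : ℂ) : riccatiSol l z₀ 0 = z₀ := by
  have hl' : (l : ℂ) ≠ 0 := Complex.ofReal_ne_zero.mpr hl
  simp [riccatiSol, hl']

theorem hasDerivAt_riccatiSol {l : ℝ} {z₀ : ℂ} {t : ℝ}
    (hD : ((l : ℂ) + Complex.I * z₀) * Complex.exp (-Complex.I * l * t) - Complex.I * z₀ ≠ 0) :
    HasDerivAt (riccatiSol l z₀)
      (-(riccatiSol l z₀ t) ^ 2 + Complex.I * l * riccatiSol l z₀ t) t := by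
  let D : ℂ → ℂ := fun s ↦
    ((l : ℂ) + Complex.I * z₀) * Complex.exp (-Complex.I * l * s) - Complex.I * z₀
  have h_linear : HasDerivAt D (l * z₀ - Complex.I * l * D t) t := by
    refine (hasDerivAt_const_mul_cexp_sub_const _ _ (-Complex.I * l) t).congr_deriv ?_
    linear_combination -(l : ℂ) * z₀ * Complex.I_sq
  exact (hasDerivAt_const_div_of_hasDerivAt_linear h_linear hD).comp_ofReal

/-- If `l ≠ 0` and the denominator
`D(t) = (l + i z₀) e^(−i l t) − i z₀` does not vanish on an interval `J ∋ 0`,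
then `z(t) = l z₀ / D(t)` satisfies `z(0) = z₀` and solves `z' = −z² + i l z` on `J`. -/
theorem stmt_6 (l : ℝ) (hl : l ≠ 0) (z₀ : ℂ) (J : Set ℝ) (hJ : J.OrdConnected)
    (h0 : (0 : ℝ) ∈ J)
    (hD : ∀ t ∈ J,
      ((l : ℂ) + Complex.I * z₀) * Complex.exp (-Complex.I * l * t) - Complex.I * z₀ ≠ 0) :
    riccatiSol l z₀ 0 = z₀ ∧
    ∀ t ∈ J, HasDerivAt (riccatiSol l z₀)
      (-(riccatiSol l z₀ t) ^ 2 + Complex.I * l * riccatiSol l z₀ t) t :=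
  ⟨riccatiSol_zero hl z₀, fun t ht ↦ hasDerivAt_riccatiSol (hD t ht)⟩
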